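/- arXiv:2010.15810 — 12 statements merged into one kernel-verified Lean document; each statement's English description precedes it below -/
import Mathlib

section
/- (Lemma 3, unique α-equilibrium in linear price competition) Let n ≥ 1, and for each i ∈ {1,…,n} let a_i > 0, b_i > 0, c_i ∈ ℝ with |c_i| < b_i, w_i > 0 with Σ_i w_i = 1, and α_i > 0. Then there exists a unique vector x ∈ ℝ^n such that for every i: (b_i + α_i (b_i − c_i w_i)) · x_i = a_i + c_i · (Σ_j w_j x_j). -/
/-!
The system is a diagonal system perturbed by a rank-one term, so it reduces to one scalar equation
for the weighted mean `m = ∑ j, w j * x j`. Since `w i ≤ 1` and `|c i| < b i`, each diagonal entry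
`D i = b i + α i * (b i - c i * w i)` exceeds `b i > c i`, and `x i = (a i + c i * m) / D i`.
Averaging gives `m = A + S * m` with `A = ∑ w i * (a i / D i)` and `S = ∑ w i * (c i / D i)`.
As `S` is a weighted mean of numbers less than `1`, `S < 1`, so `m = A / (1 - S)` is the unique
solution.
-/

/-- **Lemma 3** (unique α-equilibrium in linear price competition). For `n ≥ 1` firms with
`a i > 0`, `b i > 0`, `|c i| < b i`, weights `w i > 0` summing to `1`, and biases `α i > 0`,
there is a unique price vector `x` solving the biased first-order conditions
`(b i + α i (b i − c i w i)) x i = a i + c i · Σ_j w j x j` for every `i`. -/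
theorem unique_alpha_equilibrium_price_competition (n : ℕ) (hn : 1 ≤ n)
    (a b c w α : Fin n → ℝ)
    (ha : ∀ i, 0 < a i) (hb : ∀ i, 0 < b i) (hc : ∀ i, |c i| < b i)
    (hw : ∀ i, 0 < w i) (hw1 : ∑ i, w i = 1) (hα : ∀ i, 0 < α i) :
    ∃! x : Fin n → ℝ, ∀ i,
      (b i + α i * (b i - c i * w i)) * x i = a i + c i * (∑ j, w j * x j) := by
  have hw_le : ∀ i, w i ≤ 1 := fun i => by
    rw [← hw1]
    exact Finset.single_le_sum (fun j _ => (hw j).le) (Finset.mem_univ i)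
  have hbD : ∀ i, b i < b i + α i * (b i - c i * w i) := fun i => by
    have h1 : c i * w i ≤ |c i| * 1 :=
      mul_le_mul (le_abs_self _) (hw_le i) (hw i).le (abs_nonneg _)
    have h2 : 0 < b i - c i * w i := by linarith [hc i]
    linarith [mul_pos (hα i) h2]
  generalize hD : (fun i => b i + α i * (b i - c i * w i)) = D
  have hDi : ∀ i, b i + α i * (b i - c i * w i) = D i := fun i => congrFun hD i
  simp only [hDi] at hbD ⊢
  have hDpos : ∀ i, 0 < D i := fun i => (hb i).trans (hbD i)
  have hS : ∑ i, w i * (c i / D i) < 1 := by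
    haveI : Nonempty (Fin n) := ⟨⟨0, hn⟩⟩
    rw [← hw1]
    refine Finset.sum_lt_sum_of_nonempty Finset.univ_nonempty fun i _ => ?_
    have h : c i / D i < 1 := by
      rw [div_lt_one (hDpos i)]
      linarith [le_abs_self (c i), hc i, hbD i]
    exact mul_lt_of_lt_one_right (hw i) h
  have hmean : ∀ m : ℝ, ∑ j, w j * ((a j + c j * m) / D j)
      = ∑ j, w j * (a j / D j) + (∑ j, w j * (c j / D j)) * m := fun m => by
    rw [Finset.sum_mul, ← Finset.sum_add_distrib]
    exact Finset.sum_congr rfl fun j _ => by ring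
  generalize ∑ j, w j * (c j / D j) = S at hS hmean
  generalize ∑ j, w j * (a j / D j) = A at hmean
  have hS' : 1 - S ≠ 0 := by linarith
  refine ⟨fun i => (a i + c i * (A / (1 - S))) / D i, fun i => ?_, fun y hy => ?_⟩
  · have hfix : A + S * (A / (1 - S)) = A / (1 - S) := by
      field_simp
      ring
    simp only [hmean, hfix]
    exact mul_div_cancel₀ _ (hDpos i).ne'
  · have hy' : ∀ i, y i = (a i + c i * ∑ j, w j * y j) / D i := fun i => by
      rw [← hy i, mul_div_cancel_left₀ _ (hDpos i).ne']
    have hm : ∑ j, w j * y j = A + S * ∑ j, w j * y j := by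
      rw [← hmean]
      exact Finset.sum_congr rfl fun j _ => by rw [← hy' j]
    have hm' : ∑ j, w j * y j = A / (1 - S) := by
      rw [eq_div_iff hS']
      linarith
    funext i
    rw [hy' i, hm']
end

section
/- (Proposition 6, equal biases in the duopoly price-competition NAE) Let b_1, b_2 > 0, c_1, c_2 ∈ ℝ with c_1 c_2 > 0 and |c_i| < b_i for i = 1,2, and let w_1, w_2 > 0 with w_1 + w_2 = 1. Set b̃_i = b_i − c_i w_i, c̃_i = c_i w_{−i}, and k = (c̃_1 c̃_2)/(b̃_1 b̃_2). Then k ∈ (0,1), and if α_1, α_2 > 0 satisfy the naive-analytics-equilibrium conditions (1 + α_2)(1 − α_1) = k and (1 + α_1)(1 − α_2) = k, then α_1 = α_2 = √(1 − k). -/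
/-!
Both firms' own-price coefficients dominate the moduli of their cross-price coefficients,
`b - c w > |c| (1 - w)`, so multiplying the two inequalities gives `k < 1`; positivity of `k`
comes from `c1 * c2 > 0`. The difference of the two equilibrium conditions forces `α1 = α2`, and
either condition then reads `1 - α1 ^ 2 = k`.
-/

/-- The own-price coefficient `b - c w` strictly dominates the modulus `|c| v` of the cross-price
coefficient, because `b > |c| = |c| w + |c| v`. -/
lemma abs_mul_lt_sub_mul {b c w v : ℝ} (hc : |c| < b) (hw : 0 < w) (hwv : w + v = 1) :
    |c| * v < b - c * w := by
  have h : c * w ≤ |c| * w := mul_le_mul_of_nonneg_right (le_abs_self c) hw.le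
  have h' : |c| * w + |c| * v = |c| := by rw [← mul_add, hwv, mul_one]
  linarith

/-- **Proposition 6** (equal biases in the duopoly price-competition NAE). With
`b̃ i = b i − c i w i`, `c̃ i = c i w₋ᵢ` and `k = c̃₁ c̃₂ / (b̃₁ b̃₂)`, one has `k ∈ (0,1)`,
and any positive biases `α₁, α₂` satisfying the NAE conditions
`(1+α₂)(1−α₁) = k` and `(1+α₁)(1−α₂) = k` are equal to `√(1−k)`. -/
theorem duopoly_price_NAE_equal_biases (b1 b2 c1 c2 w1 w2 : ℝ)
    (hb1 : 0 < b1) (hb2 : 0 < b2) (hc : 0 < c1 * c2)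
    (hc1 : |c1| < b1) (hc2 : |c2| < b2)
    (hw1 : 0 < w1) (hw2 : 0 < w2) (hw : w1 + w2 = 1) :
    let bt1 := b1 - c1 * w1
    let bt2 := b2 - c2 * w2
    let ct1 := c1 * w2
    let ct2 := c2 * w1
    let k := ct1 * ct2 / (bt1 * bt2)
    (0 < k ∧ k < 1) ∧
      ∀ α1 α2 : ℝ, 0 < α1 → 0 < α2 →
        (1 + α2) * (1 - α1) = k → (1 + α1) * (1 - α2) = k →
        α1 = α2 ∧ α1 = Real.sqrt (1 - k) := by
  intro bt1 bt2 ct1 ct2 k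
  have h1 : |c1| * w2 < bt1 := abs_mul_lt_sub_mul hc1 hw1 hw
  have h2 : |c2| * w1 < bt2 := abs_mul_lt_sub_mul hc2 hw2 (by linarith)
  have hp1 : 0 ≤ |c1| * w2 := by positivity
  have hp2 : 0 ≤ |c2| * w1 := by positivity
  have hbt : 0 < bt1 * bt2 := mul_pos (hp1.trans_lt h1) (hp2.trans_lt h2)
  have hct : ct1 * ct2 = c1 * c2 * (w1 * w2) := by simp only [ct1, ct2]; ring
  -- Since `c1 * c2 > 0`, the product of the cross-price coefficients is that of their moduli.
  have habs : ct1 * ct2 = (|c1| * w2) * (|c2| * w1) := by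
    rw [hct, ← abs_of_pos hc, abs_mul]; ring
  refine ⟨⟨div_pos (by rw [hct]; positivity) hbt, ?_⟩, ?_⟩
  · rw [div_lt_one hbt, habs]
    exact mul_lt_mul'' h1 h2 hp1 hp2
  · intro α1 α2 hα1 _ e1 e2
    -- Subtracting the two conditions gives `2 * (α2 - α1) = 0`.
    have heq : α1 = α2 := by linarith
    refine ⟨heq, ?_⟩
    have hsq : 1 - k = α1 ^ 2 := by rw [← e1, ← heq]; ring
    rw [hsq, Real.sqrt_sq hα1.le]
end

section
/- (Proposition 7, values of the symmetric-oligopoly bias) For every real β > 1: α*(β, 1) = 1, and for every natural number n ≥ 2, the quantity (n−2)² − 4(n−1) − 4r(n−2−r) (with r = nβ − 1) is nonnegative and 0 < α*(β, n) < 1. -/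
/-!
With `r = nβ − 1`, the expression under the square root is `(2r − (n − 2))² − 4(n − 1)`.
For `n = 1` it is the perfect square `(2r + 1)²`, which gives the value `1`. For `n ≥ 2`,
`β > 1` gives `r > n − 1`, so `2r − (n − 2) > n`; the expression then exceeds
`n² − 4(n − 1) = (n − 2)² ≥ 0`, and its root lies strictly between `0` and `2r − (n − 2)`.
The lower bound yields `0 < α*`, as `n ≥ 2`, and the upper bound is `α* < 1`.
-/

/-- The level of analytics bias in the unique symmetric naive analytics equilibrium of a
symmetric linear price competition among `n` firms, where `β = |b/c| > 1` and `r = nβ − 1`. -/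
noncomputable def alphaStar (β : ℝ) (n : ℕ) : ℝ :=
  ((n : ℝ) - 2 + Real.sqrt (((n : ℝ) - 2) ^ 2 - 4 * ((n : ℝ) - 1)
      - 4 * ((n : ℝ) * β - 1) * ((n : ℝ) - 2 - ((n : ℝ) * β - 1)))) / (2 * ((n : ℝ) * β - 1))

/-- **Proposition 7** (values of the symmetric-oligopoly bias). For every `β > 1`:
`α*(β, 1) = 1`, and for every `n ≥ 2` the expression under the square root is nonnegative
and `0 < α*(β, n) < 1`. -/
theorem alphaStar_values (β : ℝ) (hβ : 1 < β) :
    alphaStar β 1 = 1 ∧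
      ∀ n : ℕ, 2 ≤ n →
        (0 ≤ ((n : ℝ) - 2) ^ 2 - 4 * ((n : ℝ) - 1)
            - 4 * ((n : ℝ) * β - 1) * ((n : ℝ) - 2 - ((n : ℝ) * β - 1))) ∧
          0 < alphaStar β n ∧ alphaStar β n < 1 := by
  constructor
  · have hr : (0 : ℝ) < β - 1 := by linarith
    have hD : (((1 : ℕ) : ℝ) - 2) ^ 2 - 4 * (((1 : ℕ) : ℝ) - 1)
        - 4 * (((1 : ℕ) : ℝ) * β - 1) * (((1 : ℕ) : ℝ) - 2 - (((1 : ℕ) : ℝ) * β - 1))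
        = (2 * (β - 1) + 1) ^ 2 := by
      push_cast; ring
    unfold alphaStar
    rw [hD, Real.sqrt_sq (by linarith), div_eq_one_iff_eq (by push_cast; linarith)]
    push_cast; ring
  · intro n hn
    have hn' : (2 : ℝ) ≤ n := by exact_mod_cast hn
    have hr : (n : ℝ) - 1 < n * β - 1 := by nlinarith
    unfold alphaStar
    generalize (n : ℝ) * β - 1 = r at hr ⊢
    generalize (n : ℝ) = x at hn' hr ⊢
    have hD : (x - 2) ^ 2 - 4 * (x - 1) - 4 * r * (x - 2 - r)
        = (2 * r - (x - 2)) ^ 2 - 4 * (x - 1) := by ring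
    rw [hD]
    have hpos : 0 < (2 * r - (x - 2)) ^ 2 - 4 * (x - 1) := by
      nlinarith [sq_nonneg (x - 2)]
    have hlt : Real.sqrt ((2 * r - (x - 2)) ^ 2 - 4 * (x - 1)) < 2 * r - (x - 2) := by
      rw [Real.sqrt_lt' (by linarith)]
      linarith
    have hs := Real.sqrt_pos.mpr hpos
    refine ⟨hpos.le, div_pos (by linarith) (by linarith), ?_⟩
    rw [div_lt_one (by linarith)]
    linarith
end

section
/- (Proposition 7, monotonicity of the symmetric-oligopoly bias) For every fixed natural number n ≥ 2, the function β ↦ α*(β, n) is strictly increasing on (1, ∞); and for every fixed real β > 1 and every natural number n ≥ 2, α*(β, n) < α*(β, n+1). -/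
/-- The normalized root of the discriminant, `√(b² − 4(m−1)/m²)` with `b = 2β − 1`. -/
noncomputable def discRoot (β m : ℝ) : ℝ :=
  Real.sqrt ((2 * β - 1) ^ 2 - 4 * (m - 1) / m ^ 2)

lemma discRoot_radicand_nonneg {β m : ℝ} (hβ : 1 < β) (hm : 2 ≤ m) :
    0 ≤ (2 * β - 1) ^ 2 - 4 * (m - 1) / m ^ 2 := by
  have h1 : 4 * (m - 1) / m ^ 2 ≤ 1 := by
    rw [div_le_one (by positivity)]
    nlinarith [sq_nonneg (m - 2)]
  nlinarith

/-- Rationalized form of `alphaStar`. -/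
lemma alphaStar_eq {β : ℝ} {n : ℕ} (hβ : 1 < β) (hn : 2 ≤ n) :
    alphaStar β n =
      1 - 2 * ((n : ℝ) - 1) / (n * (n * β - 1)) / (2 * β - 1 + discRoot β n) := by
  have hm : (2 : ℝ) ≤ n := by exact_mod_cast hn
  unfold alphaStar
  generalize (n : ℝ) = m at hm ⊢
  have hm0 : (0 : ℝ) < m := by linarith
  have hr : 0 < m * β - 1 := by nlinarith
  have hq : 0 ≤ discRoot β m := Real.sqrt_nonneg _
  have hq2 : discRoot β m ^ 2 = (2 * β - 1) ^ 2 - 4 * (m - 1) / m ^ 2 :=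
    Real.sq_sqrt (discRoot_radicand_nonneg hβ hm)
  have hq3 : m ^ 2 * discRoot β m ^ 2 = m ^ 2 * (2 * β - 1) ^ 2 - 4 * (m - 1) := by
    rw [hq2]
    field_simp
  have hD : (m - 2) ^ 2 - 4 * (m - 1) - 4 * (m * β - 1) * (m - 2 - (m * β - 1))
      = (m * discRoot β m) ^ 2 := by
    rw [mul_pow, hq3]
    ring
  rw [hD, Real.sqrt_sq (by positivity)]
  have hs : 0 < 2 * β - 1 + discRoot β m := by linarith
  generalize discRoot β m = q at *
  rw [div_div, eq_sub_iff_add_eq, div_add_div _ _ (by positivity) (by positivity),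
    div_eq_one_iff_eq (by positivity)]
  linear_combination (m * β - 1) * hq3

/-- **Proposition 7** (monotonicity of the symmetric-oligopoly bias). For fixed `n ≥ 2`,
`β ↦ α*(β, n)` is strictly increasing on `(1, ∞)`; and for fixed `β > 1` and `n ≥ 2`,
`α*(β, n) < α*(β, n+1)`. -/
theorem alphaStar_monotone :
    (∀ n : ℕ, 2 ≤ n → StrictMonoOn (fun β : ℝ => alphaStar β n) (Set.Ioi 1)) ∧
      (∀ β : ℝ, 1 < β → ∀ n : ℕ, 2 ≤ n → alphaStar β n < alphaStar β (n + 1)) := by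
  refine ⟨fun n hn β hβ γ hγ h => ?_, fun β hβ n hn => ?_⟩
  · simp only [Set.mem_Ioi] at hβ hγ
    have hm : (2 : ℝ) ≤ n := by exact_mod_cast hn
    simp only [alphaStar_eq hβ hn, alphaStar_eq hγ hn]
    generalize (n : ℝ) = m at hm ⊢
    have hr : 0 < m * β - 1 := by nlinarith
    have hrr : m * β - 1 < m * γ - 1 := by nlinarith
    have hq : 0 ≤ discRoot β m := Real.sqrt_nonneg _
    have hqq : discRoot β m ≤ discRoot γ m := by
      unfold discRoot
      gcongr
      linarith
    have hm1 : 0 < m - 1 := by linarith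
    have hs : 0 < 2 * β - 1 + discRoot β m := by linarith
    have hss : 2 * β - 1 + discRoot β m ≤ 2 * γ - 1 + discRoot γ m := by linarith
    gcongr ?_ - ?_
    apply div_lt_div₀ _ hss (by positivity) hs
    gcongr
  · have hm : (2 : ℝ) ≤ n := by exact_mod_cast hn
    rw [alphaStar_eq hβ hn, alphaStar_eq hβ (by omega : 2 ≤ n + 1)]
    push_cast
    generalize (n : ℝ) = m at hm ⊢
    have hr : 0 < m * β - 1 := by nlinarith
    have hr' : 0 < (m + 1) * β - 1 := by nlinarith
    have hq : 0 ≤ discRoot β m := Real.sqrt_nonneg _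
    have hqq : discRoot β m ≤ discRoot β (m + 1) := by
      unfold discRoot
      apply Real.sqrt_le_sqrt
      apply sub_le_sub_left
      rw [div_le_div_iff₀ (by positivity) (by positivity)]
      nlinarith
    have hm1 : 0 < m - 1 := by linarith
    have hs : 0 < 2 * β - 1 + discRoot β m := by linarith
    have hss : 2 * β - 1 + discRoot β m ≤ 2 * β - 1 + discRoot β (m + 1) := by linarith
    gcongr ?_ - ?_
    apply div_lt_div₀ _ hss (by positivity) hs
    rw [div_lt_div_iff₀ (by positivity) (by positivity)]
    -- After cross-multiplication the difference of the two sides is twice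
    -- `β (m² − m − 1) + 1`.
    have key : 0 < β * (m ^ 2 - m - 1) := mul_pos (by linarith) (by nlinarith)
    nlinarith
end

section
/- (Symmetric NAE prices exceed Nash prices) Let n ≥ 1 be a natural number, a > 0, b > 0, c ∈ ℝ with |c| < b, and α ∈ (0,1). Then (1+α)b − c(1 + α/n) > 0, 2b − (1 + 1/n)c > 0, and a/((1+α)b − c(1 + α/n)) > a/(2b − (1 + 1/n)c). -/
/-! With `t = 1/n ∈ (0, 1]`, the denominator for bias `β` is `(b - c) + β (b - c t)`. Both
`b - c` and `b - c t` are positive because `|c| < b`, so the denominator is positive for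
`β ≥ 0` and strictly increasing in `β`; hence the price is strictly larger at `β = α < 1`
than at `β = 1`. -/

/-- **Symmetric NAE prices exceed Nash prices.** In the symmetric linear price competition
among `n ≥ 1` firms, for `a > 0`, `b > 0`, `|c| < b` and a bias `α ∈ (0,1)`, both
denominators are positive and the symmetric `α`-equilibrium price
`a / ((1+α)b − c(1 + α/n))` exceeds the symmetric Nash price `a / (2b − (1 + 1/n)c)`. -/
theorem symmetric_NAE_price_exceeds_Nash (n : ℕ) (hn : 1 ≤ n) (a b c α : ℝ)
    (ha : 0 < a) (hb : 0 < b) (hc : |c| < b) (hα0 : 0 < α) (hα1 : α < 1) :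
    0 < (1 + α) * b - c * (1 + α / (n : ℝ)) ∧
      0 < 2 * b - (1 + 1 / (n : ℝ)) * c ∧
      a / (2 * b - (1 + 1 / (n : ℝ)) * c) < a / ((1 + α) * b - c * (1 + α / (n : ℝ))) := by
  have hn' : (1 : ℝ) ≤ n := by exact_mod_cast hn
  have ht0 : 0 < 1 / (n : ℝ) := by positivity
  have ht1 : 1 / (n : ℝ) ≤ 1 := by
    rw [div_le_one (by linarith)]
    exact hn'
  have h_div : α / (n : ℝ) = α * (1 / (n : ℝ)) := by ring
  rw [h_div]
  generalize 1 / (n : ℝ) = t at ht0 ht1 ⊢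
  have hbc : 0 < b - c := by linarith [le_abs_self c]
  have hbct : 0 < b - c * t := by
    have h₁ : c * t ≤ |c| * t := mul_le_mul_of_nonneg_right (le_abs_self c) ht0.le
    have h₂ : |c| * t ≤ |c| := mul_le_of_le_one_right (abs_nonneg c) ht1
    linarith
  -- Each denominator is `(b - c) + β * (b - c * t)`, with `β = α` and `β = 1` respectively.
  have hα : 0 < α * (b - c * t) := mul_pos hα0 hbct
  have hlt : α * (b - c * t) < b - c * t := mul_lt_of_lt_one_left hbct hα1
  have hD : 0 < (1 + α) * b - c * (1 + α * t) := by linarith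
  exact ⟨hD, by linarith, div_lt_div_of_pos_left ha hD (by linarith)⟩
end

section
/- (Proposition 8, part 1: equilibrium overestimation of advertising effectiveness) Let k ∈ (0,1). If α_1, α_2 > 0 satisfy α_1 − 1 = (k/4)·α_1 α_2 and α_2 − 1 = (k/4)·α_1 α_2, and α_1 < 2, then α_1 = α_2 = 2/(1 + √(1 − k)), and this common value is strictly greater than 1. -/
/-!
The two equations force `α1 = α2 = a` with `4 (a - 1) = k a²`, that is
`(2 - a)² = (√(1 - k) a)²`. As `0 < a < 2`, both bases are nonnegative, so
`2 - a = √(1 - k) a`, which gives `a = 2 / (1 + √(1 - k))`; and `a - 1 = (k/4) a² > 0`.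
-/

/-- **Proposition 8, part 1** (equilibrium overestimation of advertising effectiveness).
For `k ∈ (0,1)`, if positive biases `α₁, α₂` satisfy `αᵢ − 1 = (k/4) α₁ α₂` and `α₁ < 2`,
then `α₁ = α₂ = 2 / (1 + √(1 − k)) > 1`. -/
theorem advertising_NAE_bias (k α1 α2 : ℝ) (hk : k ∈ Set.Ioo (0 : ℝ) 1)
    (hα1 : 0 < α1) (hα2 : 0 < α2)
    (e1 : α1 - 1 = k / 4 * (α1 * α2)) (e2 : α2 - 1 = k / 4 * (α1 * α2)) (hlt : α1 < 2) :
    α1 = 2 / (1 + Real.sqrt (1 - k)) ∧ α2 = 2 / (1 + Real.sqrt (1 - k)) ∧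
      1 < 2 / (1 + Real.sqrt (1 - k)) := by
  obtain ⟨hk0, hk1⟩ := hk
  have h_eq : α2 = α1 := by linarith
  subst h_eq
  have hs := Real.sqrt_nonneg (1 - k)
  have hsq : Real.sqrt (1 - k) ^ 2 = 1 - k := Real.sq_sqrt (by linarith)
  have h_root : 2 - α2 = Real.sqrt (1 - k) * α2 := by
    refine (sq_eq_sq₀ (by linarith) (by positivity)).1 ?_
    rw [mul_pow, hsq]
    linarith
  have h_val : α2 = 2 / (1 + Real.sqrt (1 - k)) := by
    rw [eq_div_iff (by positivity)]
    linarith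
  have h_one : 0 < k / 4 * (α2 * α2) := by positivity
  exact ⟨h_val, h_val, h_val ▸ by linarith⟩
end

section
/- (Proposition 8, part 2: NAE advertising budgets exceed Nash budgets) Let p_1, p_2, b_1, b_2 > 0 and c_1, c_2 ∈ ℝ with c_1 c_2 > 0, |c_i| < 1/p_i for i = 1,2, and, if c_1 < 0, also |c_i| < b_i/(b_{−i} p_{−i}) for i = 1,2. Set α = 2/(1 + √(1 − c_1 c_2 p_1 p_2)). Then for each i = 1, 2: p_i α (2 b_i + c_i p_{−i} α b_{−i}) / (4 − p_1 p_2 α² c_1 c_2) > p_i (2 b_i + c_i p_{−i} b_{−i}) / (4 − p_1 p_2 c_1 c_2), i.e., the naive analytics equilibrium advertising level x_i*(α) = (left-hand side)² strictly exceeds the Nash equilibrium advertising level x_i^{NE} = (right-hand side)². -/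
/-!
Put `s = √(1 - c₁c₂p₁p₂)`, so that `0 < s < 1` and `c₁c₂p₁p₂ = 1 - s²`, and let
`e = c i * p₋ᵢ * b₋ᵢ`. With `α = 2/(1 + s)` one has `4 - α²(1 - s²) = 8s/(1 + s)`, so the two
expressions to compare are `p (b(1 + s) + e)/(2s(1 + s))` and `p (2b + e)/(3 + s²)`.
Cross-multiplying, their difference has the sign of
`(1 - s) (b(1 + s)(3 - s) + e(3 + s))`. Since `(1 + s)(3 - s) - (3 + s) = s(1 - s) > 0`, this is
positive as soon as `e > -b`, which is automatic for `c i > 0` and is exactly the extra hypothesis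
`|c i| < b i/(b₋ᵢ p₋ᵢ)` for `c i < 0`. The Nash expression is positive, so squares compare alike.
-/

/-- The comparison for one firm, with `s = √(1 - c₁c₂p₁p₂)` and `e = c i * p₋ᵢ * b₋ᵢ`. -/
theorem nash_pos_and_lt_nae {p b e s : ℝ} (hp : 0 < p) (hb : 0 < b) (he : -b < e)
    (hs0 : 0 < s) (hs1 : s < 1) :
    0 < p * (2 * b + e) / (4 - (1 - s ^ 2)) ∧
      p * (2 * b + e) / (4 - (1 - s ^ 2)) <
        p * (2 / (1 + s)) * (2 * b + (2 / (1 + s)) * e) /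
          (4 - (2 / (1 + s)) ^ 2 * (1 - s ^ 2)) := by
  have hD : 0 < 4 - (1 - s ^ 2) := by nlinarith
  have h1 : 0 < 1 + s := by linarith
  refine ⟨div_pos (mul_pos hp (by linarith)) hD, ?_⟩
  have hden : 4 - (2 / (1 + s)) ^ 2 * (1 - s ^ 2) = 8 * s / (1 + s) := by
    field_simp
    ring
  have hnae : p * (2 / (1 + s)) * (2 * b + (2 / (1 + s)) * e) /
      (4 - (2 / (1 + s)) ^ 2 * (1 - s ^ 2)) = p * (b * (1 + s) + e) / (2 * s * (1 + s)) := by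
    rw [hden]
    field_simp
    ring
  rw [hnae, div_lt_div_iff₀ hD (by positivity)]
  have hkey : 0 < b * (s * (1 - s)) + (e + b) * (3 + s) :=
    add_pos (mul_pos hb (mul_pos hs0 (by linarith))) (mul_pos (by linarith) (by linarith))
  have := mul_pos (mul_pos hp (sub_pos.2 hs1)) hkey
  nlinarith

/-- The bound on `|c|` assumed for negative `c` gives `-b < c * q * b'`. -/
theorem neg_lt_cross_term {c q b b' : ℝ} (hq : 0 < q) (hb : 0 < b) (hb' : 0 < b')
    (h : c < 0 → |c| < b / (b' * q)) : -b < c * q * b' := by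
  rcases lt_or_ge c 0 with hc | hc
  · have h2 := h hc
    rw [abs_of_neg hc, lt_div_iff₀ (by positivity)] at h2
    linarith
  · have : 0 ≤ c * q * b' := by positivity
    linarith

/-- **Proposition 8, part 2** (NAE advertising budgets exceed Nash budgets). With
`α = 2/(1 + √(1 − c₁c₂p₁p₂))`, the square root of the NAE budget,
`p i α (2 b i + c i p₋ᵢ α b₋ᵢ) / (4 − p₁ p₂ α² c₁ c₂)`, strictly exceeds the square root of
the Nash budget, `p i (2 b i + c i p₋ᵢ b₋ᵢ) / (4 − p₁ p₂ c₁ c₂)`, for each firm `i`;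
hence `x i *(α) > x i ^{NE}`. -/
theorem NAE_advertising_exceeds_Nash (p1 p2 b1 b2 c1 c2 : ℝ)
    (hp1 : 0 < p1) (hp2 : 0 < p2) (hb1 : 0 < b1) (hb2 : 0 < b2)
    (hc : 0 < c1 * c2) (hc1 : |c1| < 1 / p1) (hc2 : |c2| < 1 / p2)
    (hneg : c1 < 0 → |c1| < b1 / (b2 * p2) ∧ |c2| < b2 / (b1 * p1)) :
    let α := 2 / (1 + Real.sqrt (1 - c1 * c2 * p1 * p2))
    (p1 * (2 * b1 + c1 * p2 * b2) / (4 - p1 * p2 * c1 * c2) <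
        p1 * α * (2 * b1 + c1 * p2 * α * b2) / (4 - p1 * p2 * α ^ 2 * c1 * c2)) ∧
      (p2 * (2 * b2 + c2 * p1 * b1) / (4 - p1 * p2 * c1 * c2) <
        p2 * α * (2 * b2 + c2 * p1 * α * b1) / (4 - p1 * p2 * α ^ 2 * c1 * c2)) ∧
      ((p1 * (2 * b1 + c1 * p2 * b2) / (4 - p1 * p2 * c1 * c2)) ^ 2 <
        (p1 * α * (2 * b1 + c1 * p2 * α * b2) / (4 - p1 * p2 * α ^ 2 * c1 * c2)) ^ 2) ∧
      ((p2 * (2 * b2 + c2 * p1 * b1) / (4 - p1 * p2 * c1 * c2)) ^ 2 <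
        (p2 * α * (2 * b2 + c2 * p1 * α * b1) / (4 - p1 * p2 * α ^ 2 * c1 * c2)) ^ 2) := by
  intro α
  have hk0 : 0 < c1 * c2 * p1 * p2 := by positivity
  have hk1 : c1 * c2 * p1 * p2 < 1 := by
    rw [lt_div_iff₀ hp1] at hc1
    rw [lt_div_iff₀ hp2] at hc2
    have h := mul_lt_mul'' hc1 hc2 (by positivity) (by positivity)
    have h' : |c1| * p1 * (|c2| * p2) = c1 * c2 * p1 * p2 := by
      rw [← abs_of_pos hc, abs_mul]
      ring
    linarith
  have hs0 : 0 < Real.sqrt (1 - c1 * c2 * p1 * p2) := Real.sqrt_pos.2 (by linarith)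
  have hsq : Real.sqrt (1 - c1 * c2 * p1 * p2) ^ 2 = 1 - c1 * c2 * p1 * p2 :=
    Real.sq_sqrt (by linarith)
  have hs1 : Real.sqrt (1 - c1 * c2 * p1 * p2) < 1 := by nlinarith
  have he1 : -b1 < c1 * p2 * b2 := neg_lt_cross_term hp2 hb1 hb2 fun h => (hneg h).1
  -- `c1 * c2 > 0` makes the signs of `c1` and `c2` agree.
  have he2 : -b2 < c2 * p1 * b1 :=
    neg_lt_cross_term hp1 hb2 hb1 fun h => (hneg (neg_of_mul_pos_left hc h.le)).2
  have hd : 4 - p1 * p2 * c1 * c2 = 4 - (1 - Real.sqrt (1 - c1 * c2 * p1 * p2) ^ 2) := by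
    rw [hsq]
    ring
  have hdα : 4 - p1 * p2 * α ^ 2 * c1 * c2 =
      4 - α ^ 2 * (1 - Real.sqrt (1 - c1 * c2 * p1 * p2) ^ 2) := by
    rw [hsq]
    ring
  obtain ⟨hpos1, hlt1⟩ := nash_pos_and_lt_nae hp1 hb1 he1 hs0 hs1
  obtain ⟨hpos2, hlt2⟩ := nash_pos_and_lt_nae hp2 hb2 he2 hs0 hs1
  have hα1 : c1 * p2 * α * b2 = α * (c1 * p2 * b2) := by ring
  have hα2 : c2 * p1 * α * b1 = α * (c2 * p1 * b1) := by ring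
  rw [hd, hdα, hα1, hα2]
  exact ⟨hlt1, hlt2, pow_lt_pow_left₀ hlt1 hpos1.le two_ne_zero,
    pow_lt_pow_left₀ hlt2 hpos2.le two_ne_zero⟩
end

section
/- (Proposition 10, part 1: the economist estimates strictly positive marginal costs) Let a > 0 and b > c > 0, and set S = √(36b² − 36bc + c²). Then 36b² − 36bc + c² > 0, and the estimated marginal cost mc = 3a(6b − 3c − S) / ((3b − c)(S + 6b − 5c)) is strictly positive. -/
/-- **Proposition 10, part 1** (the economist estimates strictly positive marginal costs).
For `a > 0` and `b > c > 0`, with `S = √(36b² − 36bc + c²)`, one has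
`36b² − 36bc + c² > 0` and `mc = 3a(6b − 3c − S) / ((3b − c)(S + 6b − 5c)) > 0`. -/
theorem economist_estimates_positive_mc (a b c : ℝ) (ha : 0 < a) (hc : 0 < c) (hbc : c < b) :
    0 < 36 * b ^ 2 - 36 * b * c + c ^ 2 ∧
      0 < 3 * a * (6 * b - 3 * c - Real.sqrt (36 * b ^ 2 - 36 * b * c + c ^ 2)) /
        ((3 * b - c) * (Real.sqrt (36 * b ^ 2 - 36 * b * c + c ^ 2) + 6 * b - 5 * c)) := by
  have hpos : 0 < 36 * b ^ 2 - 36 * b * c + c ^ 2 := by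
    nlinarith [mul_pos (hc.trans hbc) (sub_pos.mpr hbc), pow_pos hc 2]
  refine ⟨hpos, ?_⟩
  -- The radicand equals `(6b − 3c)² − 8c²`, so the root lies strictly below `6b − 3c`.
  have hS : Real.sqrt (36 * b ^ 2 - 36 * b * c + c ^ 2) < 6 * b - 3 * c := by
    rw [Real.sqrt_lt' (by linarith)]
    nlinarith [pow_pos hc 2]
  have hS0 := Real.sqrt_nonneg (36 * b ^ 2 - 36 * b * c + c ^ 2)
  exact div_pos (mul_pos (by linarith) (by linarith)) (mul_pos (by linarith) (by linarith))
end

section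
/- (Merger bias comparison) Let b > c > 0. Set α_pre = (c + √(c² − 36bc + 36b²)) / (6b − 2c) and α_post = √(1 − 2c² / ((3b − c)(3b − 2c))). Then (3b − c)(3b − 2c) > 2c², and 0 < α_post < α_pre < 1. -/
/-! Write `α` for the pre-merger bias and `β` for the post-merger bias. Rationalising,
`α` is the positive root of `(3b - c) α² - c α = 9b(b - c) / (3b - c)`, while
`(3b - 2c) β² = 9b(b - c) / (3b - c)`. Hence `(3b - c) α² - c α = (3b - 2c) β²`.
Since `0 < α < 1` gives `α² < α`, the left side is smaller than `(3b - 2c) α²`,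
and therefore `β < α`.
-/


/-- **Merger bias comparison.** For `b > c > 0`, with
`α_pre = (c + √(c² − 36bc + 36b²)) / (6b − 2c)` (the pre-merger three-firm symmetric NAE
bias) and `α_post = √(1 − 2c² / ((3b − c)(3b − 2c)))` (the post-merger duopoly NAE bias),
one has `(3b − c)(3b − 2c) > 2c²` and `0 < α_post < α_pre < 1`. -/
theorem merger_bias_comparison (b c : ℝ) (hc : 0 < c) (hbc : c < b) :
    let αpre := (c + Real.sqrt (c ^ 2 - 36 * b * c + 36 * b ^ 2)) / (6 * b - 2 * c)
    let αpost := Real.sqrt (1 - 2 * c ^ 2 / ((3 * b - c) * (3 * b - 2 * c)))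
    2 * c ^ 2 < (3 * b - c) * (3 * b - 2 * c) ∧
      0 < αpost ∧ αpost < αpre ∧ αpre < 1 := by
  intro αpre αpost
  have hb : 0 < b := hc.trans hbc
  have hd : 0 < b - c := sub_pos.mpr hbc
  have h1 : 0 < 3 * b - c := by linarith
  have h2 : 0 < 3 * b - 2 * c := by linarith
  have h6 : 0 < 6 * b - 2 * c := by linarith
  have hp : 0 < b * (b - c) := mul_pos hb hd
  have hpost : 1 - 2 * c ^ 2 / ((3 * b - c) * (3 * b - 2 * c)) =
      9 * (b * (b - c)) / ((3 * b - c) * (3 * b - 2 * c)) := by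
    field_simp
    ring
  have hpost_pos : 0 < 1 - 2 * c ^ 2 / ((3 * b - c) * (3 * b - 2 * c)) := by
    rw [hpost]
    positivity
  have hα_pos : 0 < αpre := div_pos (add_pos_of_pos_of_nonneg hc (Real.sqrt_nonneg _)) h6
  have hα_lt : αpre < 1 := by
    rw [div_lt_one h6]
    have : √(c ^ 2 - 36 * b * c + 36 * b ^ 2) < 6 * b - 3 * c := by
      -- The squares differ by `8c²`.
      rw [Real.sqrt_lt' (by linarith)]
      nlinarith [mul_pos hc hc]
    linarith
  have hα_quad : (3 * b - c) * ((3 * b - c) * αpre ^ 2 - c * αpre) = 9 * (b * (b - c)) := by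
    have hS : √(c ^ 2 - 36 * b * c + 36 * b ^ 2) ^ 2 = c ^ 2 - 36 * b * c + 36 * b ^ 2 :=
      Real.sq_sqrt (by nlinarith [sq_nonneg c])
    have hα : αpre * (6 * b - 2 * c) = c + √(c ^ 2 - 36 * b * c + 36 * b ^ 2) :=
      div_mul_cancel₀ _ h6.ne'
    have hα' : √(c ^ 2 - 36 * b * c + 36 * b ^ 2) = αpre * (6 * b - 2 * c) - c := by linarith
    rw [hα'] at hS
    linear_combination hS / 4
  refine ⟨by nlinarith, Real.sqrt_pos.mpr hpost_pos, ?_, hα_lt⟩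
  have hsq : αpre ^ 2 < αpre := by nlinarith
  refine (Real.sqrt_lt' hα_pos).mpr ?_
  rw [hpost, div_lt_iff₀ (mul_pos h1 h2), ← hα_quad]
  nlinarith [mul_pos h1 (mul_pos hc (sub_pos.mpr hsq))]
end

section
/- (Merger price underestimation for firm 1: core inequality) For all real numbers b > c > 0, with S = √(36b² − 36bc + c²): 648b⁴ − 1080b³c + 594b²c² − 138bc³ + 13c⁴ + (126b²c − 108b³ − 48bc² + 7c³)·S > 0. -/
/-! Write the expression as `P - Q * S`. In terms of `t = b - c > 0`, the polynomials `P` and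
`S ^ 2` have only positive coefficients, so it suffices to compare squares. There the terms of
high degree in `b` cancel:
`P ^ 2 - Q ^ 2 * S ^ 2 = 24 c⁴ (18b² - 18bc + 5c²) (12b² - 6bc + c²)`,
and both quadratic forms are positive definite. -/

/-- **Merger price underestimation for firm 1: core inequality.** For `b > c > 0`, with
`S = √(36b² − 36bc + c²)`:
`648b⁴ − 1080b³c + 594b²c² − 138bc³ + 13c⁴ + (126b²c − 108b³ − 48bc² + 7c³)·S > 0`. -/
theorem merger_price_underestimation_firm_one (b c : ℝ) (hc : 0 < c) (hbc : c < b) :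
    let S := Real.sqrt (36 * b ^ 2 - 36 * b * c + c ^ 2)
    0 < 648 * b ^ 4 - 1080 * b ^ 3 * c + 594 * b ^ 2 * c ^ 2 - 138 * b * c ^ 3 + 13 * c ^ 4
        + (126 * b ^ 2 * c - 108 * b ^ 3 - 48 * b * c ^ 2 + 7 * c ^ 3) * S := by
  intro S
  obtain ⟨t, ht, rfl⟩ : ∃ t, 0 < t ∧ b = c + t := ⟨b - c, by linarith, by ring⟩
  have hR : 0 ≤ 36 * (c + t) ^ 2 - 36 * (c + t) * c + c ^ 2 := by
    have : 0 < c ^ 2 + 36 * c * t + 36 * t ^ 2 := by positivity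
    linarith
  have hS : S ^ 2 = 36 * (c + t) ^ 2 - 36 * (c + t) * c + c ^ 2 := Real.sq_sqrt hR
  set P := 648 * (c + t) ^ 4 - 1080 * (c + t) ^ 3 * c + 594 * (c + t) ^ 2 * c ^ 2
    - 138 * (c + t) * c ^ 3 + 13 * c ^ 4 with hP
  set Q := 108 * (c + t) ^ 3 - 126 * (c + t) ^ 2 * c + 48 * (c + t) * c ^ 2 - 7 * c ^ 3 with hQ
  have hP0 : 0 < P := by
    have h : P = 37 * c ^ 4 + 402 * c ^ 3 * t + 1242 * c ^ 2 * t ^ 2 + 1512 * c * t ^ 3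
        + 648 * t ^ 4 := by rw [hP]; ring
    rw [h]; positivity
  have hsq : (Q * S) ^ 2 < P ^ 2 := by
    have h : P ^ 2 - (Q * S) ^ 2
        = 24 * c ^ 4 * ((5 * c ^ 2 + 18 * c * t + 18 * t ^ 2)
          * (7 * c ^ 2 + 18 * c * t + 12 * t ^ 2)) := by
      rw [mul_pow, hS, hP, hQ]; ring
    have : 0 < P ^ 2 - (Q * S) ^ 2 := by rw [h]; positivity
    linarith
  have hlt : Q * S < P := lt_of_pow_lt_pow_left₀ 2 hP0.le hsq
  have h : P - Q * S = P + (126 * (c + t) ^ 2 * c - 108 * (c + t) ^ 3 - 48 * (c + t) * c ^ 2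
      + 7 * c ^ 3) * S := by rw [hQ]; ring
  linarith
end

section
/- (Merger price underestimation for the merged firm) For all real numbers a > 0 and b > c > 0, with S = √(36b² − 36bc + c²): the quantity 2ac·((17c³ − 144b²c + 108b³ + 15bc²) − (18b² − 15bc + c²)·S) divided by (6b² − 6bc + c²)·(S + 6b − 5c)·((7c − 12b)·S − 72b² + 90bc − 23c²) is strictly positive (in particular the denominator is nonzero). -/
/-!
Numerator and denominator are both negative. Since `36b² − 36bc = 36b(b − c) > 0`, one has `S > c`,
and the signs of the denominator's factors follow, the last one being the negative one. For the
numerator, write it as `2ac(P − QS)` with `Q > 0`; then `P < QS` follows from `P² < Q²S²`, a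
polynomial inequality that has nonnegative coefficients in `c` and `t = b − c`.
-/

/-- **Merger price underestimation for the merged firm.** For `a > 0` and `b > c > 0`, with
`S = √(36b² − 36bc + c²)`, the quotient
`2ac((17c³ − 144b²c + 108b³ + 15bc²) − (18b² − 15bc + c²)S)` divided by
`(6b² − 6bc + c²)(S + 6b − 5c)((7c − 12b)S − 72b² + 90bc − 23c²)` is strictly positive
(in particular the denominator is nonzero). -/
theorem merger_price_underestimation_merged_firm (a b c : ℝ)
    (ha : 0 < a) (hc : 0 < c) (hbc : c < b) :
    let S := Real.sqrt (36 * b ^ 2 - 36 * b * c + c ^ 2)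
    let num := 2 * a * c * ((17 * c ^ 3 - 144 * b ^ 2 * c + 108 * b ^ 3 + 15 * b * c ^ 2)
        - (18 * b ^ 2 - 15 * b * c + c ^ 2) * S)
    let den := (6 * b ^ 2 - 6 * b * c + c ^ 2) * (S + 6 * b - 5 * c)
        * ((7 * c - 12 * b) * S - 72 * b ^ 2 + 90 * b * c - 23 * c ^ 2)
    den ≠ 0 ∧ 0 < num / den := by
  intro S num den
  obtain ⟨t, rfl⟩ : ∃ t, b = c + t := ⟨b - c, by ring⟩
  have ht : 0 < t := by linarith
  have hrad : 0 ≤ 36 * (c + t) ^ 2 - 36 * (c + t) * c + c ^ 2 := by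
    have : 0 < c ^ 2 + 36 * c * t + 36 * t ^ 2 := by positivity
    linarith
  have hS2 : S ^ 2 = c ^ 2 + 36 * c * t + 36 * t ^ 2 := by
    rw [show S ^ 2 = _ from Real.sq_sqrt hrad]; ring
  have hS0 : 0 ≤ S := Real.sqrt_nonneg _
  have hSc : c < S := by
    refine lt_of_pow_lt_pow_left₀ 2 hS0 ?_
    rw [hS2]
    have : 0 < 36 * c * t + 36 * t ^ 2 := by positivity
    linarith
  have hQ : 0 < 18 * (c + t) ^ 2 - 15 * (c + t) * c + c ^ 2 := by
    have : 0 < 4 * c ^ 2 + 21 * c * t + 18 * t ^ 2 := by positivity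
    linarith
  have hPQ : 17 * c ^ 3 - 144 * (c + t) ^ 2 * c + 108 * (c + t) ^ 3 + 15 * (c + t) * c ^ 2
      < (18 * (c + t) ^ 2 - 15 * (c + t) * c + c ^ 2) * S := by
    refine lt_of_pow_lt_pow_left₀ 2 (mul_nonneg hQ.le hS0) ?_
    rw [mul_pow, hS2, ← sub_pos]
    ring_nf
    positivity
  have hnum : num < 0 := mul_neg_of_pos_of_neg (by positivity) (by linarith)
  have hden : den < 0 := by
    refine mul_neg_of_pos_of_neg (mul_pos ?_ (by linarith)) ?_
    · have : 0 < c ^ 2 + 6 * c * t + 6 * t ^ 2 := by positivity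
      linarith
    · have h1 : 0 < (5 * c + 12 * t) * S := mul_pos (by positivity) (hc.trans hSc)
      have h2 : 0 < 5 * c ^ 2 + 54 * c * t + 72 * t ^ 2 := by positivity
      linarith
  exact ⟨hden.ne, div_pos_of_neg_of_neg hnum hden⟩
end

section
/- (Strict monotonicity of the normal Mills ratio) The function x ↦ φ(x)/Φ(x) is strictly decreasing on ℝ: for all real x < y, φ(y)/Φ(y) < φ(x)/Φ(x). -/
/-!
Translating the variable of integration gives `Φ(x) = ∫_{u ≤ 0} φ(x + u) du`, hence
`Φ(x) / φ(x) = ∫_{u ≤ 0} exp (-x u - u² / 2) du`. For each `u < 0` the integrand is strictly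
increasing in `x`, so `Φ / φ` is strictly increasing and its reciprocal strictly decreasing.
The proof works with the cross-multiplied inequality `φ(y) Φ(x) < φ(x) Φ(y)`: its pointwise form is
`stdNormalPDF_mul_lt` and its integrated form `stdNormalPDF_mul_stdNormalCDF_lt`.
-/

open MeasureTheory

/-- The standard normal density `φ(x) = (2π)^{−1/2} exp(−x²/2)`. -/
noncomputable def stdNormalPDF (x : ℝ) : ℝ :=
  (Real.sqrt (2 * Real.pi))⁻¹ * Real.exp (-x ^ 2 / 2)

/-- The standard normal cumulative distribution function `Φ(x) = ∫_{−∞}^{x} φ(t) dt`. -/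
noncomputable def stdNormalCDF (x : ℝ) : ℝ :=
  ∫ t in Set.Iic x, stdNormalPDF t

lemma stdNormalPDF_pos (x : ℝ) : 0 < stdNormalPDF x := by
  unfold stdNormalPDF
  positivity

lemma integrable_stdNormalPDF : Integrable stdNormalPDF := by
  unfold stdNormalPDF
  refine Integrable.const_mul ?_ _
  convert integrable_exp_neg_mul_sq (b := 1 / 2) (by norm_num) using 3
  ring

lemma setIntegral_Iio_pos {f : ℝ → ℝ} (a : ℝ) (hf : Integrable f)
    (hpos : ∀ u < a, 0 < f u) : 0 < ∫ u in Set.Iio a, f u := by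
  rw [setIntegral_pos_iff_support_of_nonneg_ae
    (ae_restrict_of_forall_mem measurableSet_Iio fun u hu => (hpos u hu).le) hf.integrableOn]
  have hsub : Set.Iio a ⊆ Function.support f ∩ Set.Iio a :=
    fun u hu => ⟨(hpos u hu).ne', hu⟩
  refine lt_of_lt_of_le ?_ (measure_mono hsub)
  simp

lemma stdNormalCDF_pos (x : ℝ) : 0 < stdNormalCDF x := by
  unfold stdNormalCDF
  rw [integral_Iic_eq_integral_Iio]
  exact setIntegral_Iio_pos x integrable_stdNormalPDF fun u _ => stdNormalPDF_pos u

/-- The translation `t = x + u` moves the dependence on `x` from the domain of integration to the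
integrand. -/
lemma stdNormalCDF_eq_integral_Iio_zero (x : ℝ) :
    stdNormalCDF x = ∫ u in Set.Iio 0, stdNormalPDF (x + u) := by
  have h := (measurePreserving_add_left volume x).setIntegral_preimage_emb
    (measurableEmbedding_addLeft x) stdNormalPDF (Set.Iio x)
  unfold stdNormalCDF
  rw [integral_Iic_eq_integral_Iio, ← h]
  simp

/-- After cancelling the common terms of the exponents, this is `-x u < -y u`. -/
lemma stdNormalPDF_mul_lt {x y u : ℝ} (hxy : x < y) (hu : u < 0) :
    stdNormalPDF y * stdNormalPDF (x + u) < stdNormalPDF x * stdNormalPDF (y + u) := by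
  have hc : 0 < (Real.sqrt (2 * Real.pi))⁻¹ := by positivity
  have hexp : Real.exp (-y ^ 2 / 2) * Real.exp (-(x + u) ^ 2 / 2)
      < Real.exp (-x ^ 2 / 2) * Real.exp (-(y + u) ^ 2 / 2) := by
    rw [← Real.exp_add, ← Real.exp_add, Real.exp_lt_exp]
    nlinarith [mul_pos (sub_pos.2 hxy) (neg_pos.2 hu)]
  unfold stdNormalPDF
  rw [mul_mul_mul_comm, mul_mul_mul_comm _ (Real.exp (-x ^ 2 / 2))]
  exact mul_lt_mul_of_pos_left hexp (mul_pos hc hc)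

lemma stdNormalPDF_mul_stdNormalCDF_lt {x y : ℝ} (hxy : x < y) :
    stdNormalPDF y * stdNormalCDF x < stdNormalPDF x * stdNormalCDF y := by
  have hx : Integrable fun u => stdNormalPDF y * stdNormalPDF (x + u) :=
    (integrable_stdNormalPDF.comp_add_left x).const_mul _
  have hy : Integrable fun u => stdNormalPDF x * stdNormalPDF (y + u) :=
    (integrable_stdNormalPDF.comp_add_left y).const_mul _
  have h := setIntegral_Iio_pos 0 (hy.sub hx) fun u hu => sub_pos.2 (stdNormalPDF_mul_lt hxy hu)
  simp only [Pi.sub_apply] at h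
  rw [integral_sub hy.integrableOn hx.integrableOn, integral_const_mul, integral_const_mul,
    ← stdNormalCDF_eq_integral_Iio_zero, ← stdNormalCDF_eq_integral_Iio_zero] at h
  exact sub_pos.1 h

/-- **Strict monotonicity of the normal Mills ratio.** The function `x ↦ φ(x)/Φ(x)` is
strictly decreasing on `ℝ`. -/
theorem mills_ratio_strictAnti :
    ∀ x y : ℝ, x < y → stdNormalPDF y / stdNormalCDF y < stdNormalPDF x / stdNormalCDF x := by
  intro x y hxy
  rw [div_lt_div_iff₀ (stdNormalCDF_pos y) (stdNormalCDF_pos x)]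
  exact stdNormalPDF_mul_stdNormalCDF_lt hxy
end
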